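/- Let G be a c-closed graph, v a vertex of G, and K a maximal clique of G with v ∈ K such that K \ {v} is not a maximal clique of G \ {v}. Then |K| ≤ c. -/

import Mathlib

/-- A graph `G` is `c`-closed if whenever two distinct vertices have at least `c`
common neighbors, they are adjacent. -/
def CClosed {V : Type*} (c : ℕ) (G : SimpleGraph V) : Prop :=
  ∀ u w : V, u ≠ w → c ≤ (G.neighborSet u ∩ G.neighborSet w).ncard → G.Adj u w

/-- `K` is a maximal clique of `G`: a clique not properly contained in any other clique. -/
def IsMaxClique {V : Type*} (G : SimpleGraph V) (K : Set V) : Prop :=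
  G.IsClique K ∧ ∀ K' : Set V, G.IsClique K' → K ⊆ K' → K = K'

/-- `K` is a maximal clique of the subgraph of `G` induced by `S`: a clique of `G`
contained in `S` that is not properly contained in any other clique of `G`
contained in `S`.  (Cliques of `G[S]` are exactly cliques of `G` contained in `S`.) -/
def IsMaxCliqueIn {V : Type*} (G : SimpleGraph V) (S : Set V) (K : Set V) : Prop :=
  K ⊆ S ∧ G.IsClique K ∧ ∀ K' : Set V, K' ⊆ S → G.IsClique K' → K ⊆ K' → K = K'

/-!
A vertex `w ≠ v` witnessing that `K \ {v}` is not maximal in `G \ {v}` is adjacent to all of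
`K \ {v}`, so by maximality of `K` it is not adjacent to `v`. Hence `K \ {v}` consists of common
neighbors of the nonadjacent vertices `v` and `w`, of which there are at most `c - 1`.
-/

section

variable {V : Type*} {G : SimpleGraph V} {K S : Set V} {u v w : V} {c : ℕ}

theorem CClosed.ncard_commonNeighbors_lt (hG : CClosed c G) (huw : u ≠ w) (hadj : ¬ G.Adj u w) :
    (G.commonNeighbors u w).ncard < c :=
  lt_of_not_ge fun hcard => hadj (hG u w huw hcard)

theorem IsMaxClique.exists_not_adj (hK : IsMaxClique G K) (hw : w ∉ K) :
    ∃ u ∈ K, ¬ G.Adj w u := by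
  by_contra! hadj
  have hinsert : G.IsClique (insert w K) := hK.1.insert fun u hu _ => hadj u hu
  have heq : K = insert w K := hK.2 _ hinsert (Set.subset_insert w K)
  exact hw (heq ▸ Set.mem_insert w K)

theorem exists_forall_adj_of_not_isMaxCliqueIn (hKS : K ⊆ S) (hK : G.IsClique K)
    (hnot : ¬ IsMaxCliqueIn G S K) : ∃ w ∈ S \ K, ∀ u ∈ K, G.Adj w u := by
  contrapose! hnot
  refine ⟨hKS, hK, fun K' hK'S hK' hKK' => hKK'.antisymm fun w hw => ?_⟩
  by_contra hwK
  obtain ⟨u, hu, hwu⟩ := hnot w ⟨hK'S hw, hwK⟩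
  exact hwu (hK' hw (hKK' hu) (ne_of_mem_of_not_mem hu hwK).symm)

theorem maxClique_case_three_card_le_general (hG : CClosed c G) (hfin : (G.neighborSet v).Finite)
    (hK : IsMaxClique G K) (hv : v ∈ K) (hnot : ¬ IsMaxCliqueIn G {u : V | u ≠ v} (K \ {v})) :
    K.ncard ≤ c := by
  obtain ⟨w, ⟨hwv, hwK'⟩, hw⟩ := exists_forall_adj_of_not_isMaxCliqueIn
    (fun u hu => hu.2) (hK.1.subset Set.sdiff_subset) hnot
  have hwK : w ∉ K := fun h => hwK' ⟨h, hwv⟩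
  have hvw : ¬ G.Adj v w := by
    obtain ⟨u, hu, hwu⟩ := hK.exists_not_adj hwK
    obtain rfl : u = v := by_contra fun huv => hwu (hw u ⟨hu, huv⟩)
    exact fun h => hwu h.symm
  have hsub : K \ {v} ⊆ G.commonNeighbors v w := fun u hu =>
    ⟨hK.1 hv hu.1 (Ne.symm hu.2), hw u hu⟩
  calc
    K.ncard ≤ (K \ {v}).ncard + 1 :=
      tsub_le_iff_right.mp (Set.pred_ncard_le_ncard_sdiff_singleton K v)
    _ ≤ (G.commonNeighbors v w).ncard + 1 :=
      Nat.succ_le_succ (Set.ncard_le_ncard hsub (hfin.subset Set.inter_subset_left))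
    _ ≤ c := Nat.succ_le_of_lt (hG.ncard_commonNeighbors_lt (Ne.symm hwv) hvw)

end

/-- In a `c`-closed graph, a maximal clique `K` containing `v` such that `K \ {v}`
is not a maximal clique of `G \ {v}` has size at most `c`. -/
theorem maxClique_case_three_card_le {V : Type*} [Fintype V] {c : ℕ} (hc : 0 < c)
    (G : SimpleGraph V) (hG : CClosed c G) (v : V)
    (K : Set V) (hK : IsMaxClique G K) (hv : v ∈ K)
    (hnot : ¬ IsMaxCliqueIn G {u : V | u ≠ v} (K \ {v})) :
    K.ncard ≤ c :=
  maxClique_case_three_card_le_general hG (Set.toFinite _) hK hv hnot
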